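/- Let n ≥ 0 and let k = 2n + 1. Define the block-diagonal matrix H_o : Matrix (Fin (n+1) ⊕ Fin n) (Fin (n+1) ⊕ Fin n) ℝ (equivalently a k×k matrix) whose upper-left (n+1)×(n+1) block has entries 1/(2i + 2j + 1) (0-indexed), whose lower-right n×n block has entries -1/(2i + 2j + 3) (0-indexed), and whose off-diagonal blocks are zero. Then H_o is invertible and the sum of all entries of H_o⁻¹ equals k. -/

import Mathlib

/-- The block-diagonal matrix `H_o` (for odd `k = 2n+1`): upper-left `(n+1)×(n+1)` block
with entries `1/(2i+2j+1)` (0-indexed), lower-right `n×n` block with entries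
`-1/(2i+2j+3)` (0-indexed), zero off-diagonal blocks. -/
noncomputable def Ho (n : ℕ) : Matrix (Fin (n + 1) ⊕ Fin n) (Fin (n + 1) ⊕ Fin n) ℝ :=
  Matrix.fromBlocks
    (Matrix.of fun i j => 1 / (2 * ((i : ℕ) : ℝ) + 2 * ((j : ℕ) : ℝ) + 1)) 0 0
    (Matrix.of fun i j => -(1 / (2 * ((i : ℕ) : ℝ) + 2 * ((j : ℕ) : ℝ) + 3)))

open Matrix in
lemma sylv_isUnit {m : ℕ} (C : Matrix (Fin m) (Fin m) ℝ) (x : Fin m → ℝ) (c : ℝ) (hc : c ≠ 0)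
    (hx : Function.Injective x) (hs : ∀ i j, C i j = C j i)
    (h : ∀ i j, (x i + x j) * C i j = c) : IsUnit C := by
  rw [Matrix.isUnit_iff_isUnit_det, isUnit_iff_ne_zero]
  intro hdet
  obtain ⟨v, hv0, hv⟩ := Matrix.exists_mulVec_eq_zero_iff.mpr hdet
  have key : ∀ w : Fin m → ℝ, (∀ i, ∑ j, C i j * w j = 0) →
      (∑ j, w j = 0) ∧ ∀ i, ∑ j, C i j * (w j * x j) = 0 := by
    intro w hw
    have h1 : ∀ i, ∑ j, C i j * (w j * x j) = c * ∑ j, w j := by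
      intro i
      have : c * ∑ j, w j = x i * (∑ j, C i j * w j) + ∑ j, C i j * (w j * x j) := by
        rw [Finset.mul_sum, Finset.mul_sum, ← Finset.sum_add_distrib]
        refine Finset.sum_congr rfl fun j _ => ?_
        rw [← h i j]; ring
      rw [this, hw]; ring
    have h2 : ∑ i, w i * ∑ j, C i j * (w j * x j) = 0 := by
      simp_rw [Finset.mul_sum]
      rw [Finset.sum_comm]
      refine Finset.sum_eq_zero fun j _ => ?_
      have : ∑ i, w i * (C i j * (w j * x j)) = (w j * x j) * ∑ i, C j i * w i := by
        rw [Finset.mul_sum]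
        refine Finset.sum_congr rfl fun i _ => ?_
        rw [hs i j]; ring
      rw [this, hw, mul_zero]
    simp_rw [h1] at h2
    rw [← Finset.sum_mul] at h2
    have h3 : ∑ j, w j = 0 := by
      rcases mul_eq_zero.mp h2 with h | h
      · exact h
      · exact (mul_eq_zero.mp h).resolve_left hc
    refine ⟨h3, fun i => ?_⟩
    rw [h1, h3, mul_zero]
  have hk : ∀ k : ℕ, ∀ i, ∑ j, C i j * (v j * x j ^ k) = 0 := by
    intro k
    induction k with
    | zero => intro i; simpa [Matrix.mulVec, dotProduct] using congrFun hv i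
    | succ k ih =>
      intro i
      have := (key _ ih).2 i
      simpa [pow_succ, mul_assoc] using this
  exact hv0 (Matrix.eq_zero_of_forall_pow_sum_mul_pow_eq_zero hx fun i => (key _ (hk i)).1)

lemma sylv_sum {m : ℕ} (C : Matrix (Fin m) (Fin m) ℝ) (x : Fin m → ℝ) (c : ℝ)
    (hC : IsUnit C) (h : ∀ i j, (x i + x j) * C i j = c) :
    c * ∑ i, ∑ j, C⁻¹ i j = 2 * ∑ i, x i := by
  have hdet := (Matrix.isUnit_iff_isUnit_det _).mp hC
  have e : Matrix.diagonal x * C + C * Matrix.diagonal x = Matrix.of fun _ _ => c := by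
    ext i j
    simp only [Matrix.add_apply, Matrix.diagonal_mul, Matrix.mul_diagonal, Matrix.of_apply]
    rw [← h i j]; ring
  have e2 := congrArg (fun M => Matrix.trace (C⁻¹ * M)) e
  simp only [Matrix.mul_add, Matrix.trace_add] at e2
  rw [Matrix.trace_mul_comm, Matrix.mul_assoc, Matrix.mul_nonsing_inv _ hdet, ← Matrix.mul_assoc,
    Matrix.nonsing_inv_mul _ hdet, Matrix.mul_one, Matrix.one_mul, Matrix.trace_diagonal] at e2
  simp only [Matrix.trace, Matrix.diag_apply, Matrix.mul_apply, Matrix.of_apply,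
    ← Finset.sum_mul] at e2
  linarith

lemma sum_lin (m : ℕ) (a : ℝ) :
    ∑ i : Fin m, (2 * ((i : ℕ) : ℝ) + a) = m * (m - 1) + m * a := by
  rw [Fin.sum_univ_eq_sum_range (fun i => 2 * (i : ℝ) + a)]
  induction m with
  | zero => simp
  | succ k ih => rw [Finset.sum_range_succ, ih]; push_cast; ring

lemma inj_lin (m : ℕ) (a : ℝ) :
    Function.Injective (fun i : Fin m => 2 * ((i : ℕ) : ℝ) + a) := by
  intro i j hij
  have : ((i : ℕ) : ℝ) = ((j : ℕ) : ℝ) := by simp only at hij; linarith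
  exact Fin.ext (by exact_mod_cast this)

/-- `H_o` is invertible and the sum of all entries of its inverse equals `k`,
where `k = 2n+1`. -/
theorem Ho_inverse_entry_sum (n : ℕ) :
    IsUnit (Ho n) ∧ ∑ i, ∑ j, (Ho n)⁻¹ i j = ((2 * n + 1 : ℕ) : ℝ) := by
  unfold Ho
  set A : Matrix (Fin (n + 1)) (Fin (n + 1)) ℝ :=
    Matrix.of fun i j => 1 / (2 * ((i : ℕ) : ℝ) + 2 * ((j : ℕ) : ℝ) + 1) with hA
  set B : Matrix (Fin n) (Fin n) ℝ :=
    Matrix.of fun i j => -(1 / (2 * ((i : ℕ) : ℝ) + 2 * ((j : ℕ) : ℝ) + 3)) with hB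
  have a1 : ∀ i j : Fin (n + 1), ((2 * ((i : ℕ) : ℝ) + 1 / 2) + (2 * ((j : ℕ) : ℝ) + 1 / 2)) *
      A i j = 1 := by
    intro i j
    have : 2 * ((i : ℕ) : ℝ) + 2 * ((j : ℕ) : ℝ) + 1 ≠ 0 := by positivity
    rw [hA, Matrix.of_apply, mul_one_div, div_eq_one_iff_eq this]; ring
  have b1 : ∀ i j : Fin n, ((2 * ((i : ℕ) : ℝ) + 3 / 2) + (2 * ((j : ℕ) : ℝ) + 3 / 2)) *
      B i j = -1 := by
    intro i j
    have : 2 * ((i : ℕ) : ℝ) + 2 * ((j : ℕ) : ℝ) + 3 ≠ 0 := by positivity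
    rw [hB, Matrix.of_apply, mul_neg, mul_one_div, neg_inj, div_eq_one_iff_eq this]; ring
  have uA : IsUnit A := sylv_isUnit A _ 1 one_ne_zero (inj_lin _ _)
    (fun i j => by simp only [hA, Matrix.of_apply]; ring) a1
  have uB : IsUnit B := sylv_isUnit B _ (-1) (by norm_num) (inj_lin _ _)
    (fun i j => by simp only [hB, Matrix.of_apply]; ring) b1
  refine ⟨Matrix.isUnit_fromBlocks_zero₂₁.mpr ⟨uA, uB⟩, ?_⟩
  rw [Matrix.inv_fromBlocks_zero₂₁_of_isUnit_iff _ _ _ (iff_of_true uA uB)]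
  have sA := sylv_sum A _ 1 uA a1
  have sB := sylv_sum B _ (-1) uB b1
  rw [sum_lin] at sA sB
  simp only [Fintype.sum_sum_type, Matrix.fromBlocks_apply₁₁, Matrix.fromBlocks_apply₁₂,
    Matrix.fromBlocks_apply₂₁, Matrix.fromBlocks_apply₂₂, Matrix.mul_zero, Matrix.zero_mul,
    neg_zero, Matrix.zero_apply, Finset.sum_const_zero, add_zero, zero_add]
  push_cast at sA ⊢
  linarith
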